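/- Let T : M₀ → M₀ be a monotone distributional transform on the set of all probability distributions on ℝ. Then T commutes with the set 𝒟^R ∩ 𝒟̂ of probability distortions generated by right-continuous distortion functions d with d(0+)=0 and d(1−)=1 (i.e., (𝒟^R ∩ 𝒟̂) ∘ T = T ∘ (𝒟^R ∩ 𝒟̂) as sets of maps) if and only if T = T_d ∘ T^u for some increasing left-continuous u : ℝ → ℝ and some strictly increasing continuous distortion function d ∈ F̂_D. -/

import Mathlib

/-!
For right-continuous `d` one has `T_d F = d ∘ F`, and for left-continuous increasing `u` the set
`{u ≤ y}` is `∅`, `ℝ` or some `(-∞, c]`, so `T^u F y` is `0`, `1` or `F c` (`utilityT_cases`).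
Hence `T^u` commutes with every `T_d`, and `T = T_s ∘ T^u` satisfies
`T_{s d s⁻¹} ∘ T = T ∘ T_d` for an increasing bijection `s` of `[0,1]` (`comm_of_repr`).

Conversely, let `T` commute with the set. Point masses are fixed by all distortions, so `T` sends
the point mass at `x` to a point mass at some `u x` (`exists_u`), and `u` is increasing. The step
distortion `1_{[q,1]}` sends `F` to the point mass at its left `q`-quantile, so its counterpart
`d'` satisfies `d' (T F y) = 1` if `u (quantile of F) ≤ y`, and `0` otherwise (`step_rel`).

If `u` is constant, commutation with step distortions forces `T` to be constant (`const_case`).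
If `u a < u b`, put `s p = T (F_p) (u a)`, where `F_p` is the two-point cdf with mass `p` at `a`
and `1 - p` at `b`. The step distortions make `s` strictly increasing, and since power distortions
move one value of `s` to any point of `(0,1)` while keeping it in the range of `s`, `s` is a
bijection of `[0,1]`. Writing `T F y = s p`, one gets `q ≤ p ↔ u (q-quantile of F) ≤ y`
for all `q` in `(0,1)` (`nonconst_repr`). Applied to a uniform distribution centred at `b`, this
shows that `u` is left-continuous at `b`; then `q ≤ T^u F y` is equivalent to the same condition
(`le_utilityT_iff`), whence `p = T^u F y` and `T = T_s ∘ T^u`.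
-/


open MeasureTheory Filter Topology Set

noncomputable section

/-- The set of cdfs of compactly supported probability distributions on ℝ:
increasing, right-continuous, equal to `0` for all sufficiently small `x` and
equal to `1` for all sufficiently large `x`. -/
def mSet : Set (ℝ → ℝ) :=
  {F | Monotone F ∧ (∀ x, ContinuousWithinAt F (Set.Ici x) x) ∧
    (∃ a, ∀ x ≤ a, F x = 0) ∧ (∃ b, ∀ x, b ≤ x → F x = 1)}

/-- The set of cdfs of all probability distributions on ℝ: increasing,
right-continuous, with limit `0` at `-∞` and limit `1` at `+∞`. -/
def m0Set : Set (ℝ → ℝ) :=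
  {F | Monotone F ∧ (∀ x, ContinuousWithinAt F (Set.Ici x) x) ∧
    Tendsto F atBot (𝓝 0) ∧ Tendsto F atTop (𝓝 1)}

/-- A utility function: increasing (non-strict) and continuous. -/
def IsUF (u : ℝ → ℝ) : Prop := Monotone u ∧ Continuous u

/-- An increasing and left-continuous function on ℝ. -/
def IsLeftCtsIncr (u : ℝ → ℝ) : Prop :=
  Monotone u ∧ ∀ x, ContinuousWithinAt u (Set.Iic x) x

/-- A distortion function: an increasing function `d : [0,1] → [0,1]` with
`d 0 = 0` and `d 1 = 1` (values outside `[0,1]` are irrelevant). -/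
def IsDF (d : ℝ → ℝ) : Prop :=
  MonotoneOn d (Set.Icc 0 1) ∧ d 0 = 0 ∧ d 1 = 1

/-- Right-continuity of a distortion function on `[0,1)`. -/
def DFRightCts (d : ℝ → ℝ) : Prop :=
  ∀ x ∈ Set.Ico (0:ℝ) 1, ContinuousWithinAt d (Set.Ioi x) x

/-- A distortion function with moreover `d(0+) = 0` and `d(1-) = 1`. -/
def IsDFhat (d : ℝ → ℝ) : Prop :=
  IsDF d ∧ Tendsto d (𝓝[>] (0:ℝ)) (𝓝 0) ∧ Tendsto d (𝓝[<] (1:ℝ)) (𝓝 1)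

/-- The probability distortion generated by `d`:  `T_d F x = (d ∘ F)(x+)`,
the right limit of `d ∘ F` at `x`. -/
noncomputable def distortT (d F : ℝ → ℝ) : ℝ → ℝ :=
  fun x => Function.rightLim (d ∘ F) x

/-- The utility transform `T^u`: it maps a cdf `F` to the cdf of the
pushforward under `u` of the probability measure with cdf `F`. -/
noncomputable def utilityT (u F : ℝ → ℝ) : ℝ → ℝ := by
  classical
  exact
    if h : Monotone F ∧ ∀ x, ContinuousWithinAt F (Set.Ici x) x then
      fun x => ((StieltjesFunction.measure ⟨F, h.1, h.2⟩).map u (Set.Iic x)).toReal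
    else F

/-- Left quantile `F_L^{-1}(p) = inf {x | F x ≥ p}`. -/
noncomputable def leftQ (F : ℝ → ℝ) (p : ℝ) : ℝ := sInf {x | p ≤ F x}

/-- Right quantile `F_R^{-1}(p) = inf {x | F x > p}`. -/
noncomputable def rightQ (F : ℝ → ℝ) (p : ℝ) : ℝ := sInf {x | p < F x}

/-- The cdf of the point mass at `c`. -/
def delta (c : ℝ) : ℝ → ℝ := fun x => if c ≤ x then 1 else 0

/-- The cdf of the distribution giving mass `p` to `a` and mass `1 - p` to `b`. -/
def twoPt (a b p : ℝ) : ℝ → ℝ := fun x => p * delta a x + (1 - p) * delta b x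

/-- The step distortion function `1_{[q, 1]}`; it sends a cdf to the point mass at its left
`q`-quantile. -/
def stepD (q : ℝ) : ℝ → ℝ := fun t => if q ≤ t then 1 else 0

/-! ### Cdfs and their distortions -/

lemma m0_mem_Icc {F : ℝ → ℝ} (hF : F ∈ m0Set) (x : ℝ) : F x ∈ Icc (0:ℝ) 1 := by
  obtain ⟨hm, -, h0, h1⟩ := hF
  exact ⟨hm.le_of_tendsto h0 x, hm.ge_of_tendsto h1 x⟩

lemma delta_mem (c : ℝ) : delta c ∈ m0Set := by
  refine ⟨?_, ?_, ?_, ?_⟩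
  · intro x y hxy
    unfold delta
    split_ifs <;> linarith
  · intro x
    by_cases hx : c ≤ x
    · refine (continuousWithinAt_const (b := (1:ℝ))).congr (fun y hy => ?_) ?_
      · exact if_pos (hx.trans hy)
      · exact if_pos hx
    · refine ContinuousAt.continuousWithinAt ?_
      refine (continuousAt_const (y := (0:ℝ))).congr ?_
      filter_upwards [Iio_mem_nhds (not_le.mp hx)] with y hy
      exact (if_neg (not_le.mpr hy)).symm
  · refine tendsto_const_nhds.congr' ?_
    filter_upwards [Iio_mem_atBot c] with y hy
    exact (if_neg (not_le.mpr hy)).symm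
  · refine tendsto_const_nhds.congr' ?_
    filter_upwards [Ici_mem_atTop c] with y hy
    exact (if_pos hy).symm

lemma twoPt_mem (a b : ℝ) {p : ℝ} (hp : p ∈ Icc (0:ℝ) 1) : twoPt a b p ∈ m0Set := by
  obtain ⟨ma, ca, a0, a1⟩ := delta_mem a
  obtain ⟨mb, cb, b0, b1⟩ := delta_mem b
  refine ⟨?_, ?_, ?_, ?_⟩
  · intro x y hxy
    have h1 := mul_le_mul_of_nonneg_left (ma hxy) hp.1
    have h2 := mul_le_mul_of_nonneg_left (mb hxy) (sub_nonneg.mpr hp.2)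
    simp only [twoPt]
    linarith
  · intro x
    exact ((ca x).const_mul p).add ((cb x).const_mul (1 - p))
  · have := (a0.const_mul p).add (b0.const_mul (1 - p))
    simp only [mul_zero, add_zero] at this
    exact this
  · have := (a1.const_mul p).add (b1.const_mul (1 - p))
    simp only [mul_one, add_sub_cancel] at this
    exact this

lemma ramp_mem (b : ℝ) : (fun x : ℝ => max 0 (min 1 (x - b + 1 / 2))) ∈ m0Set := by
  refine ⟨?_, ?_, ?_, ?_⟩
  · intro x y hxy
    dsimp only
    gcongr
  · intro x
    exact Continuous.continuousWithinAt (by fun_prop)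
  · refine tendsto_const_nhds.congr' ?_
    filter_upwards [Iic_mem_atBot (b - 1)] with y hy
    have hy : y ≤ b - 1 := hy
    rw [max_eq_left]
    exact (min_le_right _ _).trans (by linarith)
  · refine tendsto_const_nhds.congr' ?_
    filter_upwards [Ici_mem_atTop (b + 1)] with y hy
    have hy : b + 1 ≤ y := hy
    rw [min_eq_left (by linarith)]
    norm_num

lemma df_tendsto_comp {d G : ℝ → ℝ} (hr : DFRightCts d) (hG : G ∈ m0Set) (x : ℝ) :
    ContinuousWithinAt (d ∘ G) (Ici x) x := by
  have hx := m0_mem_Icc hG x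
  rcases hx.2.lt_or_eq with h | h
  · have h1 := continuousWithinAt_Ioi_iff_Ici.mp (hr (G x) ⟨hx.1, h⟩)
    exact h1.comp (hG.2.1 x) (fun y hy => hG.1 hy)
  · refine (continuousWithinAt_const (b := d 1)).congr (fun y hy => ?_) ?_
    · have : G y = 1 := le_antisymm (m0_mem_Icc hG y).2 (h ▸ hG.1 hy)
      simp [this]
    · simp [h]

/-- For right-continuous `d`, the right limit in `T_d` is superfluous. -/
lemma distortT_eq {d G : ℝ → ℝ} (hr : DFRightCts d) (hG : G ∈ m0Set) :
    distortT d G = d ∘ G := by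
  funext x
  exact rightLim_eq_of_tendsto
    (continuousWithinAt_Ioi_iff_Ici.mpr (df_tendsto_comp hr hG x))

lemma comp_mem {d G : ℝ → ℝ} (hd : IsDFhat d) (hr : DFRightCts d) (hG : G ∈ m0Set) :
    d ∘ G ∈ m0Set := by
  refine ⟨fun x y hxy => hd.1.1 (m0_mem_Icc hG x) (m0_mem_Icc hG y) (hG.1 hxy),
    df_tendsto_comp hr hG, ?_, ?_⟩
  · have h0 := continuousWithinAt_Ioi_iff_Ici.mp (hr 0 ⟨le_rfl, zero_lt_one⟩)
    rw [ContinuousWithinAt, hd.1.2.1] at h0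
    exact h0.comp (tendsto_nhdsWithin_iff.mpr
      ⟨hG.2.2.1, Eventually.of_forall fun y => (m0_mem_Icc hG y).1⟩)
  · have h0 : ContinuousWithinAt d (Iio 1) 1 := by
      rw [ContinuousWithinAt, hd.1.2.2]; exact hd.2.2
    have h1 := continuousWithinAt_Iio_iff_Iic.mp h0
    rw [ContinuousWithinAt, hd.1.2.2] at h1
    exact h1.comp (tendsto_nhdsWithin_iff.mpr
      ⟨hG.2.2.2, Eventually.of_forall fun y => (m0_mem_Icc hG y).2⟩)

lemma exists_quantile {F : ℝ → ℝ} (hF : F ∈ m0Set) {q : ℝ} (h0 : 0 < q) (h1 : q < 1) :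
    ∃ c, ∀ x, q ≤ F x ↔ c ≤ x := by
  obtain ⟨hm, hc, hb, ht⟩ := hF
  obtain ⟨t, ht'⟩ := (ht.eventually (lt_mem_nhds h1)).exists
  obtain ⟨s, hs⟩ := (hb.eventually (gt_mem_nhds h0)).exists
  have hbdd : BddBelow {x | q ≤ F x} := by
    refine ⟨s, fun x hx => ?_⟩
    by_contra hlt
    exact absurd (hm (not_le.mp hlt).le) (not_le.mpr (hs.trans_le hx))
  have hne : {x | q ≤ F x}.Nonempty := ⟨t, ht'.le⟩
  refine ⟨sInf {x | q ≤ F x}, fun x => ⟨fun hx => csInf_le hbdd hx, fun hx => ?_⟩⟩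
  by_contra hlt
  -- right-continuity keeps `F < q` slightly to the right of `x`
  have h2 : ∀ᶠ y in 𝓝[>] x, F y < q :=
    (hc x).mono Ioi_subset_Ici_self |>.eventually (gt_mem_nhds (not_le.mp hlt))
  obtain ⟨y, hy, hxy⟩ := (h2.and self_mem_nhdsWithin).exists
  obtain ⟨z, hz, hzy⟩ := exists_lt_of_csInf_lt hne (lt_of_le_of_lt hx hxy)
  exact absurd (hm hzy.le) (not_le.mpr (hy.trans_le hz))

lemma stepD_hat {q : ℝ} (h0 : 0 < q) (h1 : q < 1) : IsDFhat (stepD q) := by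
  have hm : Monotone (stepD q) := (delta_mem q).1
  refine ⟨⟨hm.monotoneOn _, if_neg (not_le.mpr h0), if_pos h1.le⟩, ?_, ?_⟩
  · refine tendsto_const_nhds.congr' ?_
    filter_upwards [mem_nhdsWithin_of_mem_nhds (Iio_mem_nhds h0)] with y hy
    exact (if_neg (not_le.mpr hy)).symm
  · refine tendsto_const_nhds.congr' ?_
    filter_upwards [mem_nhdsWithin_of_mem_nhds (Ioi_mem_nhds h1)] with y hy
    exact (if_pos hy.le).symm

lemma stepD_right (q : ℝ) : DFRightCts (stepD q) :=
  fun x _ => ((delta_mem q).2.1 x).mono Ioi_subset_Ici_self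

lemma stepD_comp {F : ℝ → ℝ} {q c : ℝ} (h : ∀ x, q ≤ F x ↔ c ≤ x) :
    stepD q ∘ F = delta c := by
  funext x
  simp [stepD, delta, h x]

lemma hat_comp_delta {d : ℝ → ℝ} (hd : IsDFhat d) (c : ℝ) : d ∘ delta c = delta c := by
  funext x
  simp only [Function.comp, delta]
  split_ifs
  · exact hd.1.2.2
  · exact hd.1.2.1

/-- Elements of `[0,1]` are determined by their comparisons with the points of `(0,1)`. -/
lemma eq_of_cmp {p w : ℝ} (hp : p ∈ Icc (0:ℝ) 1) (hw : w ∈ Icc (0:ℝ) 1)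
    (h : ∀ q, 0 < q → q < 1 → (q ≤ p ↔ q ≤ w)) : p = w := by
  rcases lt_trichotomy p w with hlt | heq | hlt
  · have := (h ((p + w) / 2) (by linarith [hp.1]) (by linarith [hw.2])).mpr (by linarith)
    linarith
  · exact heq
  · have := (h ((p + w) / 2) (by linarith [hw.1]) (by linarith [hp.2])).mp (by linarith)
    linarith

/-! ### The utility transform -/

lemma preimage_Iic {u : ℝ → ℝ} (hu : IsLeftCtsIncr u) (y : ℝ) :
    u ⁻¹' Iic y = ∅ ∨ u ⁻¹' Iic y = univ ∨ ∃ c, u ⁻¹' Iic y = Iic c := by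
  rcases eq_empty_or_nonempty (u ⁻¹' Iic y) with h | hne
  · exact Or.inl h
  by_cases hun : u ⁻¹' Iic y = univ
  · exact Or.inr (Or.inl hun)
  obtain ⟨z, hz⟩ := (ne_univ_iff_exists_notMem _).mp hun
  have hub : ∀ w, y < u w → w ∈ upperBounds (u ⁻¹' Iic y) := by
    intro w hw x hx
    by_contra hlt
    exact absurd (hu.1 (not_le.mp hlt).le) (not_le.mpr (lt_of_le_of_lt hx hw))
  have hbdd : BddAbove (u ⁻¹' Iic y) := ⟨z, hub z (not_le.mp hz)⟩
  have hmem : u (sSup (u ⁻¹' Iic y)) ≤ y := by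
    by_contra hlt
    have h2 : ∀ᶠ w in 𝓝[<] (sSup (u ⁻¹' Iic y)), y < u w :=
      (hu.2 _).mono Iio_subset_Iic_self |>.eventually (lt_mem_nhds (not_le.mp hlt))
    obtain ⟨w, hw, hwlt⟩ := (h2.and self_mem_nhdsWithin).exists
    exact absurd (csSup_le hne (hub w hw)) (not_le.mpr hwlt)
  refine Or.inr (Or.inr ⟨sSup (u ⁻¹' Iic y), ?_⟩)
  ext x
  exact ⟨fun hx => le_csSup hbdd hx, fun hx => (hu.1 hx).trans hmem⟩

/-- The probability measure with cdf `F`. -/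
def cdfMeasure (F : ℝ → ℝ) (hF : F ∈ m0Set) : Measure ℝ :=
  StieltjesFunction.measure ⟨F, hF.1, hF.2.1⟩

lemma cdfMeasure_prob (F : ℝ → ℝ) (hF : F ∈ m0Set) : IsProbabilityMeasure (cdfMeasure F hF) :=
  StieltjesFunction.isProbabilityMeasure _ hF.2.2.1 hF.2.2.2

lemma utilityT_apply {u F : ℝ → ℝ} (hF : F ∈ m0Set) (x : ℝ) :
    utilityT u F x = ((cdfMeasure F hF).map u (Iic x)).toReal := by
  unfold utilityT
  rw [dif_pos ⟨hF.1, hF.2.1⟩]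
  rfl

lemma utilityT_mem {u F : ℝ → ℝ} (hu : Monotone u) (hF : F ∈ m0Set) :
    utilityT u F ∈ m0Set := by
  have := cdfMeasure_prob F hF
  have : IsProbabilityMeasure ((cdfMeasure F hF).map u) :=
    Measure.isProbabilityMeasure_map hu.measurable.aemeasurable
  have h : utilityT u F = ProbabilityTheory.cdf ((cdfMeasure F hF).map u) := by
    funext x
    rw [utilityT_apply hF, ProbabilityTheory.cdf_eq_real]
    rfl
  rw [h]
  exact ⟨ProbabilityTheory.monotone_cdf _, (ProbabilityTheory.cdf _).right_continuous,
    ProbabilityTheory.tendsto_cdf_atBot _, ProbabilityTheory.tendsto_cdf_atTop _⟩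

/-- For left-continuous `u`, `T^u(F)(y)` is the value of `F` at a point of `[-∞, ∞]` that
depends on `u` and `y` only: the supremum of `{u ≤ y}`. -/
lemma utilityT_cases {u : ℝ → ℝ} (hu : IsLeftCtsIncr u) (y : ℝ) :
    ((∀ x, y < u x) ∧ ∀ F ∈ m0Set, utilityT u F y = 0) ∨
    ((∀ x, u x ≤ y) ∧ ∀ F ∈ m0Set, utilityT u F y = 1) ∨
    ∃ c, (∀ x, u x ≤ y ↔ x ≤ c) ∧ ∀ F ∈ m0Set, utilityT u F y = F c := by
  have key : ∀ F (hF : F ∈ m0Set),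
      utilityT u F y = (cdfMeasure F hF (u ⁻¹' Iic y)).toReal := fun F hF => by
    rw [utilityT_apply hF, Measure.map_apply hu.1.measurable measurableSet_Iic]
  rcases preimage_Iic hu y with h | h | ⟨c, h⟩
  · refine Or.inl ⟨fun x => ?_, fun F hF => by rw [key F hF, h]; simp⟩
    by_contra hx
    have : x ∈ u ⁻¹' Iic y := not_lt.mp hx
    rw [h] at this
    exact this
  · refine Or.inr (Or.inl ⟨fun x => ?_, fun F hF => ?_⟩)
    · have : x ∈ u ⁻¹' Iic y := h ▸ mem_univ x
      exact this
    · have := cdfMeasure_prob F hF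
      rw [key F hF, h]; simp
  · refine Or.inr (Or.inr ⟨c, fun x => ?_, fun F hF => ?_⟩)
    · exact Set.ext_iff.mp h x
    · rw [key F hF, h, cdfMeasure, StieltjesFunction.measure_Iic _ hF.2.2.1, sub_zero,
        ENNReal.toReal_ofReal (m0_mem_Icc hF c).1]

lemma utilityT_comp {u d F : ℝ → ℝ} (hu : IsLeftCtsIncr u) (hd : IsDFhat d)
    (hr : DFRightCts d) (hF : F ∈ m0Set) : utilityT u (d ∘ F) = d ∘ utilityT u F := by
  have hdF := comp_mem hd hr hF
  funext y
  rcases utilityT_cases hu y with ⟨-, h⟩ | ⟨-, h⟩ | ⟨c, -, h⟩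
  · simp [h F hF, h _ hdF, hd.1.2.1]
  · simp [h F hF, h _ hdF, hd.1.2.2]
  · simp [h F hF, h _ hdF]

/-- The left `q`-quantile of `T^u(F)` is the image under `u` of that of `F`. -/
lemma le_utilityT_iff {u F : ℝ → ℝ} (hu : IsLeftCtsIncr u) (hF : F ∈ m0Set) {q c : ℝ}
    (h0 : 0 < q) (h1 : q < 1) (hc : ∀ x, q ≤ F x ↔ c ≤ x) (y : ℝ) :
    q ≤ utilityT u F y ↔ u c ≤ y := by
  rcases utilityT_cases hu y with ⟨hx, h⟩ | ⟨hx, h⟩ | ⟨z, hx, h⟩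
  · simp [h F hF, not_le.mpr h0, not_le.mpr (hx c)]
  · simp [h F hF, h1.le, hx c]
  · rw [h F hF, hx c, hc z]

/-! ### Increasing bijections of the unit interval -/

/-- A strictly increasing surjection of `[0,1]` extends, together with its inverse, to continuous
increasing functions on `ℝ`. -/
lemma exists_inverse {s : ℝ → ℝ} (hs : StrictMonoOn s (Icc 0 1)) (hm : MapsTo s (Icc 0 1) (Icc 0 1))
    (hsurj : SurjOn s (Icc 0 1) (Icc 0 1)) :
    ∃ e f : ℝ → ℝ, Continuous e ∧ Continuous f ∧ EqOn e s (Icc 0 1) ∧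
      MapsTo f (Icc 0 1) (Icc 0 1) ∧ StrictMonoOn f (Icc 0 1) ∧
      (∀ t ∈ Icc (0:ℝ) 1, f (s t) = t) ∧ (∀ t ∈ Icc (0:ℝ) 1, s (f t) = t) := by
  let g : Icc (0:ℝ) 1 → Icc (0:ℝ) 1 := fun x => ⟨s x, hm x.2⟩
  have hg : StrictMono g := fun x y hxy => hs x.2 y.2 hxy
  have hgs : Function.Surjective g := by
    rintro ⟨y, hy⟩
    obtain ⟨x, hx, rfl⟩ := hsurj hy
    exact ⟨⟨x, hx⟩, rfl⟩
  let φ := hg.orderIsoOfSurjective g hgs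
  have hφ : ∀ x, φ x = g x := fun x => rfl
  have hf : ∀ t (ht : t ∈ Icc (0:ℝ) 1),
      IccExtend zero_le_one (fun x => (φ.symm x : ℝ)) t = φ.symm ⟨t, ht⟩ :=
    fun t ht => IccExtend_of_mem _ _ ht
  refine ⟨IccExtend zero_le_one (fun x => (φ x : ℝ)),
    IccExtend zero_le_one (fun x => (φ.symm x : ℝ)), ?_, ?_, ?_, ?_, ?_, ?_, ?_⟩
  · exact (continuous_subtype_val.comp φ.continuous).Icc_extend'
  · exact (continuous_subtype_val.comp φ.symm.continuous).Icc_extend'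
  · intro t ht
    rw [IccExtend_of_mem _ _ ht]
    rfl
  · intro t ht
    rw [hf t ht]
    exact (φ.symm ⟨t, ht⟩).2
  · intro t ht t' ht' hlt
    rw [hf t ht, hf t' ht']
    exact φ.symm.strictMono (show (⟨t, ht⟩ : Icc (0:ℝ) 1) < ⟨t', ht'⟩ from hlt)
  · intro t ht
    rw [hf _ (hm ht)]
    have : φ ⟨t, ht⟩ = ⟨s t, hm ht⟩ := rfl
    rw [← this, φ.symm_apply_apply]
  · intro t ht
    rw [hf t ht]
    have : φ (φ.symm ⟨t, ht⟩) = ⟨t, ht⟩ := φ.apply_symm_apply _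
    exact congrArg Subtype.val this

lemma conj_mem {e f d : ℝ → ℝ} (he : Continuous e) (hem : StrictMonoOn e (Icc 0 1))
    (he0 : e 0 = 0) (he1 : e 1 = 1) (hf : Continuous f) (hfm : StrictMonoOn f (Icc 0 1))
    (hf0 : f 0 = 0) (hf1 : f 1 = 1) (hd : IsDFhat d) (hr : DFRightCts d) :
    IsDFhat (e ∘ d ∘ f) ∧ DFRightCts (e ∘ d ∘ f) := by
  have I0 : (0:ℝ) ∈ Icc (0:ℝ) 1 := by simp
  have I1 : (1:ℝ) ∈ Icc (0:ℝ) 1 := by simp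
  have fI : MapsTo f (Icc 0 1) (Icc 0 1) := fun x hx =>
    ⟨hf0 ▸ hfm.monotoneOn I0 hx hx.1, hf1 ▸ hfm.monotoneOn hx I1 hx.2⟩
  have dI : MapsTo d (Icc 0 1) (Icc 0 1) := fun x hx =>
    ⟨hd.1.2.1 ▸ hd.1.1 I0 hx hx.1, hd.1.2.2 ▸ hd.1.1 hx I1 hx.2⟩
  have fr : ∀ x ∈ Ico (0:ℝ) 1, Tendsto f (𝓝[>] x) (𝓝[>] (f x)) := by
    intro x hx
    refine tendsto_nhdsWithin_iff.mpr ⟨hf.continuousAt.continuousWithinAt, ?_⟩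
    filter_upwards [Ioc_mem_nhdsGT hx.2] with y hy
    exact hfm ⟨hx.1, hx.2.le⟩ ⟨hx.1.trans hy.1.le, hy.2⟩ hy.1
  have fl : Tendsto f (𝓝[<] 1) (𝓝[<] 1) := by
    refine tendsto_nhdsWithin_iff.mpr ⟨?_, ?_⟩
    · have := hf.continuousAt (x := 1) |>.continuousWithinAt (s := Iio 1)
      rwa [ContinuousWithinAt, hf1] at this
    · filter_upwards [Ico_mem_nhdsLT (zero_lt_one (α := ℝ))] with y hy
      have := hfm ⟨hy.1, hy.2.le⟩ I1 hy.2
      rwa [hf1] at this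
  have f0 := fr 0 ⟨le_rfl, zero_lt_one⟩
  rw [hf0] at f0
  refine ⟨⟨⟨?_, ?_, ?_⟩, ?_, ?_⟩, ?_⟩
  · intro x hx y hy hxy
    exact hem.monotoneOn (dI (fI hx)) (dI (fI hy))
      (hd.1.1 (fI hx) (fI hy) (hfm.monotoneOn hx hy hxy))
  · simp [hf0, hd.1.2.1, he0]
  · simp [hf1, hd.1.2.2, he1]
  · have := (he.tendsto 0).comp (hd.2.1.comp f0)
    rwa [he0] at this
  · have := (he.tendsto 1).comp (hd.2.2.comp fl)
    rwa [he1] at this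
  · intro x hx
    have hfx : f x ∈ Ico (0:ℝ) 1 :=
      ⟨(fI ⟨hx.1, hx.2.le⟩).1, by
        have := hfm ⟨hx.1, hx.2.le⟩ I1 hx.2
        rwa [hf1] at this⟩
    exact (he.tendsto _).comp ((hr _ hfx).tendsto.comp (fr x hx))

lemma endpoints {s : ℝ → ℝ} (hs : StrictMonoOn s (Icc 0 1)) (hm : MapsTo s (Icc 0 1) (Icc 0 1))
    (hsurj : SurjOn s (Icc 0 1) (Icc 0 1)) : s 0 = 0 ∧ s 1 = 1 := by
  have I0 : (0:ℝ) ∈ Icc (0:ℝ) 1 := by simp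
  have I1 : (1:ℝ) ∈ Icc (0:ℝ) 1 := by simp
  constructor
  · obtain ⟨x, hx, h⟩ := hsurj I0
    exact le_antisymm ((hs.monotoneOn I0 hx hx.1).trans h.le) (hm I0).1
  · obtain ⟨x, hx, h⟩ := hsurj I1
    exact le_antisymm (hm I1).2 (h.symm.le.trans (hs.monotoneOn hx I1 hx.2))

lemma hat_of_continuous {e : ℝ → ℝ} (he : Continuous e) (hem : MonotoneOn e (Icc 0 1))
    (he0 : e 0 = 0) (he1 : e 1 = 1) : IsDFhat e := by
  refine ⟨⟨hem, he0, he1⟩, ?_, ?_⟩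
  · have := he.tendsto 0
    rw [he0] at this
    exact this.mono_left nhdsWithin_le_nhds
  · have := he.tendsto 1
    rw [he1] at this
    exact this.mono_left nhdsWithin_le_nhds

lemma right_of_continuousOn {d : ℝ → ℝ} (hd : ContinuousOn d (Icc 0 1)) : DFRightCts d := by
  intro x hx
  have h := hd x ⟨hx.1, hx.2.le⟩
  refine h.mono_of_mem_nhdsWithin ?_
  filter_upwards [Ioc_mem_nhdsGT hx.2] with y hy
  exact ⟨hx.1.trans hy.1.le, hy.2⟩

/-- Any point of `(0,1)` is moved to any other by a continuous distortion function, namely by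
a power `t ↦ t ^ k` with `k > 0`. -/
lemma exists_power {s r : ℝ} (hs0 : 0 < s) (hs1 : s < 1) (hr0 : 0 < r) (hr1 : r < 1) :
    ∃ d : ℝ → ℝ, IsDFhat d ∧ DFRightCts d ∧ d s = r := by
  have hk : 0 < Real.log r / Real.log s :=
    div_pos_of_neg_of_neg (Real.log_neg hr0 hr1) (Real.log_neg hs0 hs1)
  have hc : Continuous fun t : ℝ => t ^ (Real.log r / Real.log s) :=
    Real.continuous_rpow_const hk.le
  refine ⟨fun t => t ^ (Real.log r / Real.log s), hat_of_continuous hc ?_ ?_ ?_,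
    right_of_continuousOn hc.continuousOn, ?_⟩
  · intro x hx y hy hxy
    exact Real.rpow_le_rpow hx.1 hxy hk.le
  · exact Real.zero_rpow hk.ne'
  · exact Real.one_rpow _
  · dsimp only
    rw [Real.rpow_def_of_pos hs0, mul_div_cancel₀ _ (Real.log_neg hs0 hs1).ne, Real.exp_log hr0]

/-! ### The characterization -/

/-- Commutation with `𝒟^R ∩ 𝒟̂`, with the distortions written as compositions. -/
def Comm (T : (ℝ → ℝ) → ℝ → ℝ) : Prop :=
  (∀ d : ℝ → ℝ, IsDFhat d → DFRightCts d → ∃ d' : ℝ → ℝ, IsDFhat d' ∧ DFRightCts d' ∧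
      ∀ F ∈ m0Set, d' ∘ T F = T (d ∘ F)) ∧
  (∀ d' : ℝ → ℝ, IsDFhat d' → DFRightCts d' → ∃ d : ℝ → ℝ, IsDFhat d ∧ DFRightCts d ∧
      ∀ F ∈ m0Set, d' ∘ T F = T (d ∘ F))

lemma comm_iff (T : (ℝ → ℝ) → ℝ → ℝ) (hT : ∀ F ∈ m0Set, T F ∈ m0Set) :
    ((∀ d : ℝ → ℝ, IsDFhat d → DFRightCts d → ∃ d' : ℝ → ℝ, IsDFhat d' ∧ DFRightCts d' ∧
        ∀ F ∈ m0Set, distortT d' (T F) = T (distortT d F)) ∧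
      (∀ d' : ℝ → ℝ, IsDFhat d' → DFRightCts d' → ∃ d : ℝ → ℝ, IsDFhat d ∧ DFRightCts d ∧
        ∀ F ∈ m0Set, distortT d' (T F) = T (distortT d F))) ↔ Comm T := by
  have key : ∀ d d' : ℝ → ℝ, DFRightCts d → DFRightCts d' →
      ((∀ F ∈ m0Set, distortT d' (T F) = T (distortT d F)) ↔
        ∀ F ∈ m0Set, d' ∘ T F = T (d ∘ F)) := by
    intro d d' hr hr'
    refine forall₂_congr fun F hF => ?_
    rw [distortT_eq hr hF, distortT_eq hr' (hT F hF)]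
  constructor
  · rintro ⟨h1, h2⟩
    refine ⟨fun d hd hr => ?_, fun d' hd' hr' => ?_⟩
    · obtain ⟨d', hd', hr', h⟩ := h1 d hd hr
      exact ⟨d', hd', hr', (key d d' hr hr').mp h⟩
    · obtain ⟨d, hd, hr, h⟩ := h2 d' hd' hr'
      exact ⟨d, hd, hr, (key d d' hr hr').mp h⟩
  · rintro ⟨h1, h2⟩
    refine ⟨fun d hd hr => ?_, fun d' hd' hr' => ?_⟩
    · obtain ⟨d', hd', hr', h⟩ := h1 d hd hr
      exact ⟨d', hd', hr', (key d d' hr hr').mpr h⟩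
    · obtain ⟨d, hd, hr, h⟩ := h2 d' hd' hr'
      exact ⟨d, hd, hr, (key d d' hr hr').mpr h⟩

/-- `T_s ∘ T^u` commutes with the distortions: `T_d` on one side corresponds to `T_{s d s⁻¹}` on
the other. -/
lemma comm_of_repr {T : (ℝ → ℝ) → ℝ → ℝ} {s u : ℝ → ℝ} (hu : IsLeftCtsIncr u)
    (hs : IsDFhat s) (hsm : StrictMonoOn s (Icc 0 1)) (hsc : ContinuousOn s (Icc 0 1))
    (h : ∀ F ∈ m0Set, T F = distortT s (utilityT u F)) : Comm T := by
  have I0 : (0:ℝ) ∈ Icc (0:ℝ) 1 := by simp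
  have I1 : (1:ℝ) ∈ Icc (0:ℝ) 1 := by simp
  have hs0 := hs.1.2.1
  have hs1 := hs.1.2.2
  have hmaps : MapsTo s (Icc 0 1) (Icc 0 1) := fun x hx =>
    ⟨hs0 ▸ hsm.monotoneOn I0 hx hx.1, hs1 ▸ hsm.monotoneOn hx I1 hx.2⟩
  have hsurj : SurjOn s (Icc 0 1) (Icc 0 1) := by
    have := intermediate_value_Icc (zero_le_one (α := ℝ)) hsc
    rwa [hs0, hs1] at this
  obtain ⟨e, f, hec, hfc, hes, hfmaps, hfm, hfs, hsf⟩ := exists_inverse hsm hmaps hsurj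
  have hem : StrictMonoOn e (Icc 0 1) := hsm.congr hes.symm
  have he0 : e 0 = 0 := (hes I0).trans hs0
  have he1 : e 1 = 1 := (hes I1).trans hs1
  have hf0 : f 0 = 0 := by rw [← hs0]; simpa [hs0] using hfs 0 I0
  have hf1 : f 1 = 1 := by rw [← hs1]; simpa [hs1] using hfs 1 I1
  have hT : ∀ F ∈ m0Set, T F = s ∘ utilityT u F := fun F hF => by
    rw [h F hF, distortT_eq (right_of_continuousOn hsc) (utilityT_mem hu.1 hF)]
  have dI : ∀ d, IsDFhat d → MapsTo d (Icc 0 1) (Icc 0 1) := fun d hd x hx =>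
    ⟨hd.1.2.1 ▸ hd.1.1 I0 hx hx.1, hd.1.2.2 ▸ hd.1.1 hx I1 hx.2⟩
  refine ⟨fun d hd hr => ?_, fun d' hd' hr' => ?_⟩
  · obtain ⟨h1, h2⟩ := conj_mem hec hem he0 he1 hfc hfm hf0 hf1 hd hr
    refine ⟨_, h1, h2, fun F hF => ?_⟩
    rw [hT F hF, hT _ (comp_mem hd hr hF), utilityT_comp hu hd hr hF]
    funext y
    have hy := m0_mem_Icc (utilityT_mem hu.1 hF) y
    simp only [Function.comp]
    rw [hfs _ hy, hes (dI d hd hy)]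
  · obtain ⟨h1, h2⟩ := conj_mem hfc hfm hf0 hf1 hec hem he0 he1 hd' hr'
    refine ⟨_, h1, h2, fun F hF => ?_⟩
    rw [hT F hF, hT _ (comp_mem h1 h2 hF), utilityT_comp hu h1 h2 hF]
    funext y
    have hy := m0_mem_Icc (utilityT_mem hu.1 hF) y
    simp only [Function.comp]
    rw [hes hy, hsf _ (dI d' hd' (hmaps hy))]

/-- A commuting `T` maps point masses to point masses, since a point mass is fixed by every
distortion, and only point masses are fixed by all of them. -/
lemma exists_u {T : (ℝ → ℝ) → ℝ → ℝ} (hT : ∀ F ∈ m0Set, T F ∈ m0Set) (hc : Comm T) :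
    ∃ u : ℝ → ℝ, ∀ x, T (delta x) = delta (u x) := by
  have : ∀ x, ∃ c, T (delta x) = delta c := by
    intro x
    have hm := hT _ (delta_mem x)
    obtain ⟨c, hcq⟩ := exists_quantile hm (q := 1 / 2) (by norm_num) (by norm_num)
    obtain ⟨d, hd, hr, h⟩ := hc.2 (stepD (1 / 2)) (stepD_hat (by norm_num) (by norm_num))
      (stepD_right _)
    have h1 := h _ (delta_mem x)
    rw [hat_comp_delta hd, stepD_comp hcq] at h1
    exact ⟨c, h1.symm⟩
  choose u hu using this
  exact ⟨u, hu⟩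

lemma delta_le_iff {a b : ℝ} : (∀ x, delta b x ≤ delta a x) ↔ a ≤ b := by
  constructor
  · intro h
    by_contra hlt
    have := h b
    norm_num [delta, hlt] at this
  · intro h x
    simp only [delta]
    split_ifs <;> linarith

lemma step_rel {T : (ℝ → ℝ) → ℝ → ℝ} (hc : Comm T) {u : ℝ → ℝ}
    (hu : ∀ x, T (delta x) = delta (u x)) {q : ℝ} (h0 : 0 < q) (h1 : q < 1) :
    ∃ d' : ℝ → ℝ, IsDFhat d' ∧ ∀ F ∈ m0Set, ∀ c, (∀ x, q ≤ F x ↔ c ≤ x) →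
      ∀ y, d' (T F y) = delta (u c) y := by
  obtain ⟨d', hd', -, h⟩ := hc.1 (stepD q) (stepD_hat h0 h1) (stepD_right q)
  refine ⟨d', hd', fun F hF c hcF y => ?_⟩
  have := congrFun (h F hF) y
  rwa [stepD_comp hcF, hu] at this

/-- If all point masses have the same image `delta a`, then `T` is constant. -/
lemma const_case {T : (ℝ → ℝ) → ℝ → ℝ} (hT : ∀ F ∈ m0Set, T F ∈ m0Set) (hc : Comm T) {a : ℝ}
    (hu : ∀ x, T (delta x) = delta a) {F : ℝ → ℝ} (hF : F ∈ m0Set) : T F = delta a := by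
  have key : ∀ r, 0 < r → r < 1 → stepD r ∘ T F = delta a := by
    intro r h0 h1
    obtain ⟨d, hd, hr, h⟩ := hc.2 (stepD r) (stepD_hat h0 h1) (stepD_right r)
    obtain ⟨c, hcq⟩ := exists_quantile (hT F hF) h0 h1
    obtain ⟨d', hd', hstep⟩ := step_rel hc (u := fun _ => a) hu (q := 1 / 2) (by norm_num)
      (by norm_num)
    have hdF := comp_mem hd hr hF
    obtain ⟨z, hz⟩ := exists_quantile hdF (q := 1 / 2) (by norm_num) (by norm_num)
    have h2 : T (d ∘ F) = delta c := by rw [← h F hF, stepD_comp hcq]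
    have h3 : d' ∘ T (d ∘ F) = delta a := funext fun y => hstep _ hdF z hz y
    rw [h2, hat_comp_delta hd'] at h3
    rw [stepD_comp hcq, h3]
  funext y
  refine eq_of_cmp (m0_mem_Icc (hT F hF) y) (m0_mem_Icc (delta_mem a) y) fun q h0 h1 => ?_
  have h := congrFun (key q h0 h1) y
  simp only [Function.comp, stepD] at h
  constructor
  · intro hq
    rw [if_pos hq] at h
    exact h ▸ h1.le
  · intro hq
    by_contra hn
    rw [if_neg hn] at h
    linarith

lemma twoPt_apply {a b p x : ℝ} (hab : a < b) :
    twoPt a b p x = if b ≤ x then 1 else if a ≤ x then p else 0 := by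
  simp only [twoPt, delta]
  split_ifs <;> linarith

lemma comp_twoPt {d : ℝ → ℝ} (hd : IsDFhat d) {a b : ℝ} (hab : a < b) (p : ℝ) :
    d ∘ twoPt a b p = twoPt a b (d p) := by
  funext x
  simp only [Function.comp, twoPt_apply hab]
  split_ifs
  · exact hd.1.2.2
  · rfl
  · exact hd.1.2.1

/-- If `u a < u b`, the map `s p = T (twoPt a b p) (u a)` is the distortion function sought: it is
an increasing bijection of `[0,1]`, so every value `T F y` has the form `s p`, and the position
of `p` relative to `q` is governed by the `q`-quantile of `F`. -/
lemma nonconst_repr {T : (ℝ → ℝ) → ℝ → ℝ} (hT : ∀ F ∈ m0Set, T F ∈ m0Set)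
    (hmono : ∀ F ∈ m0Set, ∀ G ∈ m0Set, (∀ x, G x ≤ F x) → ∀ x, T G x ≤ T F x)
    (hc : Comm T) {u : ℝ → ℝ} (hu : ∀ x, T (delta x) = delta (u x))
    {a b : ℝ} (hab : a < b) (huab : u a < u b) :
    ∃ s : ℝ → ℝ, StrictMonoOn s (Icc 0 1) ∧ MapsTo s (Icc 0 1) (Icc 0 1) ∧
      SurjOn s (Icc 0 1) (Icc 0 1) ∧
      ∀ F ∈ m0Set, ∀ y, ∀ p ∈ Icc (0:ℝ) 1, T F y = s p → ∀ q, 0 < q → q < 1 →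
        ∀ c, (∀ x, q ≤ F x ↔ c ≤ x) → (q ≤ p ↔ u c ≤ y) := by
  have I0 : (0:ℝ) ∈ Icc (0:ℝ) 1 := by simp
  have I1 : (1:ℝ) ∈ Icc (0:ℝ) 1 := by simp
  set s : ℝ → ℝ := fun p => T (twoPt a b p) (u a) with hs
  have hs0 : s 0 = 0 := by
    have : twoPt a b 0 = delta b := by funext x; simp [twoPt]
    simp [hs, this, hu, delta, huab]
  have hs1 : s 1 = 1 := by
    have : twoPt a b 1 = delta a := by funext x; simp [twoPt]
    simp [hs, this, hu, delta]
  have hmaps : MapsTo s (Icc 0 1) (Icc 0 1) := fun p hp =>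
    m0_mem_Icc (hT _ (twoPt_mem a b hp)) _
  have hsmono : MonotoneOn s (Icc 0 1) := by
    intro p hp q hq hpq
    refine hmono _ (twoPt_mem a b hq) _ (twoPt_mem a b hp) (fun x => ?_) _
    rw [twoPt_apply hab, twoPt_apply hab]
    split_ifs <;> first | exact hpq | exact le_rfl
  -- the counterpart of `stepD q` takes the values `1_{q ≤ p}` on the `s p`
  have hstep : ∀ q, 0 < q → q < 1 → ∃ d' : ℝ → ℝ,
      (∀ F ∈ m0Set, ∀ c, (∀ x, q ≤ F x ↔ c ≤ x) → ∀ y, d' (T F y) = delta (u c) y) ∧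
      ∀ p ∈ Icc (0:ℝ) 1, d' (s p) = if q ≤ p then 1 else 0 := by
    intro q h0 h1
    obtain ⟨d', hd', h⟩ := step_rel hc hu h0 h1
    refine ⟨d', h, fun p hp => ?_⟩
    by_cases hqp : q ≤ p
    · rw [if_pos hqp, hs, h _ (twoPt_mem a b hp) a, delta, if_pos le_rfl]
      intro x
      rw [twoPt_apply hab]
      split_ifs with hb ha
      · simp [h1.le, hab.le.trans hb]
      · simp [hqp, ha]
      · simp [h0, ha]
    · rw [if_neg hqp, hs, h _ (twoPt_mem a b hp) b, delta, if_neg (not_le.mpr huab)]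
      intro x
      rw [twoPt_apply hab]
      split_ifs with hb ha
      · simp [h1.le, hb]
      · simp [hqp, hb]
      · simp [h0, hb]
  have hslt : ∀ p ∈ Icc (0:ℝ) 1, ∀ q, p < q → q < 1 → s p < s q := by
    intro p hp q hpq hq1
    have hq0 : 0 < q := lt_of_le_of_lt hp.1 hpq
    obtain ⟨d', -, h⟩ := hstep q hq0 hq1
    refine lt_of_le_of_ne (hsmono hp ⟨hq0.le, hq1.le⟩ hpq.le) fun heq => ?_
    have h2 := h p hp
    rw [heq, h q ⟨hq0.le, hq1.le⟩, if_pos le_rfl, if_neg (not_le.mpr hpq)] at h2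
    exact one_ne_zero h2
  have hstrict : StrictMonoOn s (Icc 0 1) := by
    intro p hp q hq hpq
    have h1 := hslt p hp ((p + q) / 2) (by linarith) (by linarith [hq.2])
    exact h1.trans_le (hsmono ⟨by linarith [hp.1, hq.1], by linarith [hp.2, hq.2]⟩ hq
      (by linarith))
  have hsurj : SurjOn s (Icc 0 1) (Icc 0 1) := by
    intro r hr
    rcases hr.1.eq_or_lt with h | hr0
    · exact ⟨0, I0, hs0.trans h⟩
    rcases hr.2.eq_or_lt with h | hr1
    · exact ⟨1, I1, hs1.trans h.symm⟩
    have hhalf : (1 / 2 : ℝ) ∈ Icc (0:ℝ) 1 := by constructor <;> norm_num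
    have hlo : 0 < s (1 / 2) := hs0 ▸ hstrict I0 hhalf (by norm_num)
    have hhi : s (1 / 2) < 1 := (hstrict hhalf I1 (by norm_num)).trans_eq hs1
    obtain ⟨d', hd', hr', hdr⟩ := exists_power hlo hhi hr0 hr1
    obtain ⟨d, hd, hrd, h⟩ := hc.2 d' hd' hr'
    have h2 := congrFun (h _ (twoPt_mem a b hhalf)) (u a)
    rw [comp_twoPt hd hab] at h2
    refine ⟨d (1 / 2), ⟨hd.1.2.1 ▸ hd.1.1 I0 hhalf hhalf.1, (hd.1.1 hhalf I1 hhalf.2).trans_eq hd.1.2.2⟩,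
      ?_⟩
    exact h2.symm.trans hdr
  refine ⟨s, hstrict, hmaps, hsurj, fun F hF y p hp hTp q h0 h1 c hcF => ?_⟩
  obtain ⟨d', h2, h3⟩ := hstep q h0 h1
  have h4 := h2 F hF c hcF y
  rw [hTp, h3 p hp, delta] at h4
  by_cases hq : q ≤ p <;> by_cases hy : u c ≤ y <;> simp [hq, hy] at h4 ⊢

lemma u_mono {T : (ℝ → ℝ) → ℝ → ℝ}
    (hmono : ∀ F ∈ m0Set, ∀ G ∈ m0Set, (∀ x, G x ≤ F x) → ∀ x, T G x ≤ T F x)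
    {u : ℝ → ℝ} (hu : ∀ x, T (delta x) = delta (u x)) : Monotone u := by
  intro x y hxy
  refine delta_le_iff.mp fun z => ?_
  rw [← hu, ← hu]
  exact hmono _ (delta_mem x) _ (delta_mem y) (delta_le_iff.mpr hxy) z

lemma repr_of_comm {T : (ℝ → ℝ) → ℝ → ℝ} (hT : ∀ F ∈ m0Set, T F ∈ m0Set)
    (hmono : ∀ F ∈ m0Set, ∀ G ∈ m0Set, (∀ x, G x ≤ F x) → ∀ x, T G x ≤ T F x)
    (hc : Comm T) :
    ∃ d u : ℝ → ℝ, IsLeftCtsIncr u ∧ IsDFhat d ∧ StrictMonoOn d (Set.Icc 0 1) ∧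
        ContinuousOn d (Set.Icc 0 1) ∧
        ∀ F ∈ m0Set, T F = distortT d (utilityT u F) := by
  obtain ⟨u, hu⟩ := exists_u hT hc
  have hum := u_mono hmono hu
  by_cases hconst : ∀ x, u x = u 0
  · have hul : IsLeftCtsIncr (fun _ => u 0) := ⟨monotone_const, fun x => continuousWithinAt_const⟩
    have hid : DFRightCts id := right_of_continuousOn continuousOn_id
    refine ⟨id, fun _ => u 0, hul,
      hat_of_continuous continuous_id (monotone_id.monotoneOn _) rfl rfl,
      strictMono_id.strictMonoOn _, continuousOn_id, fun F hF => ?_⟩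
    rw [distortT_eq hid (utilityT_mem monotone_const hF), Function.id_comp,
      const_case hT hc (fun x => by rw [hu, hconst]) hF]
    have hm := utilityT_mem (u := fun _ => u 0) monotone_const hF
    funext y
    refine eq_of_cmp (m0_mem_Icc (delta_mem _) y) (m0_mem_Icc hm y) fun q h0 h1 => ?_
    obtain ⟨c, hcF⟩ := exists_quantile hF h0 h1
    rw [le_utilityT_iff hul hF h0 h1 hcF, delta]
    split_ifs with h <;> simp [h, h0, h1.le]
  · push Not at hconst
    obtain ⟨x, hx⟩ := hconst
    obtain ⟨a, b, hab, huab⟩ : ∃ a b, a < b ∧ u a < u b := by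
      rcases hx.lt_or_gt with h | h
      · exact ⟨x, 0, hum.reflect_lt h, h⟩
      · exact ⟨0, x, hum.reflect_lt h, h⟩
    obtain ⟨s, hsm, hmaps, hsurj, hrel⟩ := nonconst_repr hT hmono hc hu hab huab
    have hul : IsLeftCtsIncr u := by
      refine ⟨hum, fun b => ?_⟩
      have hkey : ∀ y, y < u b → ∃ z, z < b ∧ y < u z := by
        intro y hy
        by_contra hcon
        push Not at hcon
        -- the uniform distribution on `[b - 1/2, b + 1/2]` has `q`-quantile `b + q - 1/2`
        have hF := ramp_mem b
        obtain ⟨p, hp, hps⟩ := hsurj (m0_mem_Icc (hT _ hF) y)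
        have hq : ∀ q, 0 < q → q < 1 → (q ≤ p ↔ u (b + q - 1 / 2) ≤ y) := by
          intro q h0 h1
          refine hrel _ hF y p hp hps.symm q h0 h1 _ fun x => ?_
          rw [le_max_iff, le_min_iff]
          constructor
          · rintro (h | h) <;> linarith
          · intro h
            exact Or.inr ⟨h1.le, by linarith⟩
        have hp2 : p < 1 / 2 := by
          by_contra h
          have := (hq (1 / 2) (by norm_num) (by norm_num)).mp (not_lt.mp h)
          rw [add_sub_cancel_right] at this
          linarith
        have := (hq ((p + 1 / 2) / 2) (by linarith [hp.1]) (by linarith)).mpr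
          (hcon _ (by linarith))
        linarith
      refine tendsto_order.mpr ⟨fun y hy => ?_, fun y hy => ?_⟩
      · obtain ⟨z, hz, hyz⟩ := hkey y hy
        filter_upwards [mem_nhdsWithin_of_mem_nhds (Ioi_mem_nhds hz)] with w hw
        exact hyz.trans_le (hum (le_of_lt hw))
      · filter_upwards [self_mem_nhdsWithin] with w hw
        exact lt_of_le_of_lt (hum hw) hy
    obtain ⟨e, f, hec, -, hes, -⟩ := exists_inverse hsm hmaps hsurj
    obtain ⟨hs0, hs1⟩ := endpoints hsm hmaps hsurj
    have hem : StrictMonoOn e (Icc 0 1) := hsm.congr hes.symm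
    refine ⟨e, u, hul, hat_of_continuous hec hem.monotoneOn ((hes (by simp)).trans hs0)
      ((hes (by simp)).trans hs1), hem, hec.continuousOn, fun F hF => ?_⟩
    have hm := utilityT_mem hum hF
    rw [distortT_eq (right_of_continuousOn hec.continuousOn) hm]
    funext y
    obtain ⟨p, hp, hps⟩ := hsurj (m0_mem_Icc (hT _ hF) y)
    have hpw : p = utilityT u F y := by
      refine eq_of_cmp hp (m0_mem_Icc hm y) fun q h0 h1 => ?_
      obtain ⟨c, hcF⟩ := exists_quantile hF h0 h1
      rw [hrel F hF y p hp hps.symm q h0 h1 c hcF, le_utilityT_iff hul hF h0 h1 hcF]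
    rw [Function.comp, ← hpw, hes hp, hps]

/-- A monotone map `T : M₀ → M₀` commutes with the set `𝒟^R ∩ 𝒟̂` of
probability distortions generated by right-continuous distortion functions `d`
with `d(0+) = 0` and `d(1-) = 1` if and only if `T = T_d ∘ T^u` for some
increasing left-continuous `u : ℝ → ℝ` and some strictly increasing continuous
distortion function `d ∈ F̂_D`. -/
theorem stmt13 (T : (ℝ → ℝ) → ℝ → ℝ) (hT : ∀ F ∈ m0Set, T F ∈ m0Set)
    (hmono : ∀ F ∈ m0Set, ∀ G ∈ m0Set, (∀ x, G x ≤ F x) → ∀ x, T G x ≤ T F x) :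
    ((∀ d : ℝ → ℝ, IsDFhat d → DFRightCts d → ∃ d' : ℝ → ℝ, IsDFhat d' ∧ DFRightCts d' ∧
        ∀ F ∈ m0Set, distortT d' (T F) = T (distortT d F)) ∧
      (∀ d' : ℝ → ℝ, IsDFhat d' → DFRightCts d' → ∃ d : ℝ → ℝ, IsDFhat d ∧ DFRightCts d ∧
        ∀ F ∈ m0Set, distortT d' (T F) = T (distortT d F))) ↔
      ∃ d u : ℝ → ℝ, IsLeftCtsIncr u ∧ IsDFhat d ∧ StrictMonoOn d (Set.Icc 0 1) ∧
        ContinuousOn d (Set.Icc 0 1) ∧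
        ∀ F ∈ m0Set, T F = distortT d (utilityT u F) := by
  rw [comm_iff T hT]
  constructor
  · exact repr_of_comm hT hmono
  · rintro ⟨d, u, hu, hd, hdm, hdc, h⟩
    exact comm_of_repr hu hd hdm hdc h
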